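/- Let n ≥ 2. There is no absolute constant c > 0 such that j_G(x,y) ≥ c·ĵ_G(x,y) holds for every proper subdomain G of ℝⁿ and all x,y ∈ G. More precisely: for every c > 0 there exist a point a ∈ ℝⁿ and distinct points x, y ∈ ℝⁿ \ {a} such that, for the punctured space G_a = ℝⁿ \ {a} (whose boundary in S̄ⁿ is {a, ∞}), one has j_{G_a}(x,y) < c·ĵ_{G_a}(x,y), where j_{G_a}(x,y) = log(1 + |x−y|/min(|x−a|,|y−a|)) and ĵ_{G_a}(x,y) = log(1 + q(x,y)/min{q(x,a), q(y,a), 1/σ(x), 1/σ(y)}). -/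

import Mathlib

/-!
Take `x = 0`, `y = e` a unit vector, and `a = -t e` with `t = 2 / c`. Since `σ(0) = 1`, one has
`q(x,y) = 1/σ(y) = q(y,∞)`, so the chordal quotient is at least `1` and `ĵ ≥ log 2` whatever `t` is,
whereas `j = log (1 + 1/t) ≤ 1/t = c/2 < c log 2`: the Euclidean distance sees only the far-away
puncture `a`, and not the boundary point `∞`.
-/

/-- `σ(x) = √(1 + |x|²)`. -/
noncomputable def sigmaFn {n : ℕ} (x : EuclideanSpace ℝ (Fin n)) : ℝ :=
  Real.sqrt (1 + ‖x‖ ^ 2)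

/-- The chordal (spherical) distance between two finite points of the Möbius space
`S̄ⁿ = ℝⁿ ∪ {∞}`: `q(x,y) = |x−y|/(σ(x)σ(y))`. Recall `q(x,∞) = 1/σ(x)`. -/
noncomputable def chordal {n : ℕ} (x y : EuclideanSpace ℝ (Fin n)) : ℝ :=
  ‖x - y‖ / (sigmaFn x * sigmaFn y)

theorem sigmaFn_pos {n : ℕ} (x : EuclideanSpace ℝ (Fin n)) : 0 < sigmaFn x := by
  unfold sigmaFn; positivity

theorem chordal_pos {n : ℕ} {x y : EuclideanSpace ℝ (Fin n)} (h : x ≠ y) : 0 < chordal x y :=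
  div_pos (norm_pos_iff.mpr (sub_ne_zero.mpr h)) (mul_pos (sigmaFn_pos x) (sigmaFn_pos y))

/-- There is no absolute constant `c > 0` with `j_G ≥ c·ĵ_G` for all proper
subdomains `G` of `ℝⁿ`: for every `c > 0` there are a point `a ∈ ℝⁿ` and distinct
points `x, y ∈ ℝⁿ \ {a}` such that, for the punctured space `G_a = ℝⁿ \ {a}`
(whose boundary in `S̄ⁿ` is `{a, ∞}`), one has `j_{G_a}(x,y) < c·ĵ_{G_a}(x,y)`. -/
theorem no_reverse_constant {n : ℕ} (hn : 2 ≤ n) (c : ℝ) (hc : 0 < c) :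
    ∃ a x y : EuclideanSpace ℝ (Fin n), x ≠ a ∧ y ≠ a ∧ x ≠ y ∧
      Real.log (1 + ‖x - y‖ / min ‖x - a‖ ‖y - a‖) <
        c * Real.log (1 + chordal x y /
          min (min (chordal x a) (chordal y a))
              (min (1 / sigmaFn x) (1 / sigmaFn y))) := by
  obtain ⟨e, he⟩ : ∃ e : EuclideanSpace ℝ (Fin n), ‖e‖ = 1 :=
    ⟨EuclideanSpace.single ⟨0, by omega⟩ 1, by simp⟩
  have he0 : e ≠ 0 := by
    rintro rfl
    simp at he
  have ht : 0 < 2 / c := by positivity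
  have hxa : (0 : EuclideanSpace ℝ (Fin n)) ≠ -((2 / c) • e) := by
    rw [ne_comm, neg_ne_zero]
    exact smul_ne_zero ht.ne' he0
  have hya_eq : e - -((2 / c) • e) = (1 + 2 / c) • e := by
    rw [add_smul, one_smul, sub_neg_eq_add]
  have hya : e ≠ -((2 / c) • e) := by
    rw [← sub_ne_zero, hya_eq]
    exact smul_ne_zero (by positivity) he0
  refine ⟨-((2 / c) • e), 0, e, hxa, hya, he0.symm, ?_⟩
  have hnx : ‖(0 : EuclideanSpace ℝ (Fin n)) - -((2 / c) • e)‖ = 2 / c := by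
    rw [zero_sub, neg_neg, norm_smul, he, mul_one, Real.norm_of_nonneg ht.le]
  have hny : ‖e - -((2 / c) • e)‖ = 1 + 2 / c := by
    rw [hya_eq, norm_smul, he, mul_one, Real.norm_of_nonneg (by positivity)]
  have hj : Real.log (1 + ‖(0 : EuclideanSpace ℝ (Fin n)) - e‖ /
      min ‖(0 : EuclideanSpace ℝ (Fin n)) - -((2 / c) • e)‖ ‖e - -((2 / c) • e)‖) ≤ c / 2 := by
    rw [hnx, hny, min_eq_left (by linarith), zero_sub, norm_neg, he, one_div_div]
    have := Real.log_le_sub_one_of_pos (show 0 < 1 + c / 2 by positivity)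
    linarith
  have hq : chordal 0 e = 1 / sigmaFn e := by
    simp [chordal, he, sigmaFn]
  -- Positivity of the minimum matters: a zero denominator would make the quotient `0`.
  have hratio : 1 ≤ chordal 0 e /
      min (min (chordal 0 (-((2 / c) • e))) (chordal e (-((2 / c) • e))))
        (min (1 / sigmaFn (0 : EuclideanSpace ℝ (Fin n))) (1 / sigmaFn e)) := by
    rw [one_le_div (lt_min (lt_min (chordal_pos hxa) (chordal_pos hya))
      (lt_min (one_div_pos.mpr (sigmaFn_pos _)) (one_div_pos.mpr (sigmaFn_pos _)))), hq]
    exact (min_le_right _ _).trans (min_le_right _ _)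
  have hlog := Real.log_le_log (by norm_num : (0 : ℝ) < 2)
    (one_add_one_eq_two.symm.trans_le (add_le_add le_rfl hratio))
  calc _ ≤ c / 2 := hj
    _ < c * Real.log 2 := by nlinarith [Real.log_two_gt_d9]
    _ ≤ _ := mul_le_mul_of_nonneg_left hlog hc.le
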